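/- (Gromov–Cauchy estimate for orbits with linear escape, from the rate-of-convergence proposition for the hitting point.) Let X be a metric space and b > 1 a real number such that X is strongly b-hyperbolic. Let x_0 ∈ X, let γ > 0 and A ≥ 0, and let (y_n)_{n ≥ 0} be a sequence in X such that d(y_n, y_{n+1}) ≤ A and d(y_n, x_0) ≥ n·γ for all n ≥ 0. Then for all integers m > n ≥ 0, b^{−⟨y_n, y_m⟩_{x_0}} ≤ (b^{A/2}/(1 − b^{−γ}))·b^{−nγ}; in particular ⟨y_n, y_m⟩_{x_0} → ∞ as n, m → ∞, i.e. (y_n) is a Gromov sequence. -/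

import Mathlib

/-!
Linear escape and bounded steps make consecutive Gromov products grow linearly:
`-⟨y n, y (n + 1)⟩ ≤ A / 2 - n γ`. The triangle inequality for `b ^ (-⟨·,·⟩)` then compares
`b ^ (-⟨y n, y m⟩)` with the tail of a geometric series of ratio `b ^ (-γ)`. Taking logarithms
gives `⟨y n, y m⟩ ≥ min n m * γ - const`, hence divergence; on the diagonal the Gromov product is
the distance to the basepoint, which escapes by hypothesis.
-/

open Real Filter

/-- The Gromov product `⟨x, y⟩_w` of `x` and `y` with respect to basepoint `w`. -/
noncomputable def gromovProd {X : Type*} [MetricSpace X] (w x y : X) : ℝ :=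
  (dist x w + dist w y - dist x y) / 2

/-- `X` is strongly `b`-hyperbolic if for every basepoint `w`, the map
`(x, y) ↦ b ^ (-⟨x,y⟩_w)` satisfies the triangle inequality. -/
def StronglyHyperbolic (X : Type*) [MetricSpace X] (b : ℝ) : Prop :=
  ∀ w x y z : X,
    b ^ (-(gromovProd w x z)) ≤ b ^ (-(gromovProd w x y)) + b ^ (-(gromovProd w y z))

lemma gromovProd_comm {X : Type*} [MetricSpace X] (w x y : X) :
    gromovProd w x y = gromovProd w y x := by
  simp only [gromovProd, dist_comm x w, dist_comm w y, dist_comm x y]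
  ring

lemma gromovProd_self {X : Type*} [MetricSpace X] (w x : X) :
    gromovProd w x x = dist x w := by
  simp only [gromovProd, dist_comm w x, dist_self]
  ring

lemma rpow_neg_gromovProd_succ_le {X : Type*} [MetricSpace X] {b : ℝ} (hb : 1 < b)
    {x₀ : X} {γ A : ℝ} (hγ : 0 < γ) {y : ℕ → X}
    (hstep : ∀ n : ℕ, dist (y n) (y (n + 1)) ≤ A)
    (hesc : ∀ n : ℕ, (n : ℝ) * γ ≤ dist (y n) x₀) (n : ℕ) :
    b ^ (-(gromovProd x₀ (y n) (y (n + 1)))) ≤ b ^ (A / 2) * b ^ (-(n : ℝ) * γ) := by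
  rw [← Real.rpow_add (by linarith)]
  apply Real.rpow_le_rpow_of_exponent_le hb.le
  have h1 := hstep n
  have h2 := hesc n
  have h3 := hesc (n + 1)
  push_cast at h3
  simp only [gromovProd, dist_comm x₀]
  linarith

/-- The geometric-series estimate, by induction on the gap `k + 1` for all starting indices at
once: splitting off the first step reproduces the bound exactly, since
`c r ^ n + c / (1 - r) * r ^ (n + 1) = c / (1 - r) * r ^ n`. -/
lemma rpow_neg_gromovProd_add_le {X : Type*} [MetricSpace X] {b : ℝ} (hb : 1 < b)
    (hX : StronglyHyperbolic X b) {x₀ : X} {γ A : ℝ} (hγ : 0 < γ) {y : ℕ → X}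
    (hstep : ∀ n : ℕ, dist (y n) (y (n + 1)) ≤ A)
    (hesc : ∀ n : ℕ, (n : ℝ) * γ ≤ dist (y n) x₀) (k n : ℕ) :
    b ^ (-(gromovProd x₀ (y n) (y (n + k + 1))))
      ≤ (b ^ (A / 2) / (1 - b ^ (-γ))) * b ^ (-(n : ℝ) * γ) := by
  have hb0 : 0 < b := by linarith
  have hr : 0 < 1 - b ^ (-γ) :=
    sub_pos.2 (Real.rpow_lt_one_of_one_lt_of_neg hb (by linarith))
  have hsplit (n : ℕ) : b ^ (A / 2) * b ^ (-(n : ℝ) * γ)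
      + (b ^ (A / 2) / (1 - b ^ (-γ))) * b ^ (-((n + 1 : ℕ) : ℝ) * γ)
      = (b ^ (A / 2) / (1 - b ^ (-γ))) * b ^ (-(n : ℝ) * γ) := by
    have : b ^ (-((n + 1 : ℕ) : ℝ) * γ) = b ^ (-(n : ℝ) * γ) * b ^ (-γ) := by
      rw [← Real.rpow_add hb0]
      congr 1
      push_cast
      ring
    rw [this]
    field_simp
    ring
  induction k generalizing n with
  | zero =>
    rw [← hsplit n]
    have h := rpow_neg_gromovProd_succ_le hb hγ hstep hesc n
    have : 0 ≤ (b ^ (A / 2) / (1 - b ^ (-γ))) * b ^ (-((n + 1 : ℕ) : ℝ) * γ) := by positivity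
    simp only [add_zero]
    linarith
  | succ k ih =>
    have h := rpow_neg_gromovProd_succ_le hb hγ hstep hesc n
    have h2 := ih (n + 1)
    rw [show n + 1 + k + 1 = n + (k + 1) + 1 by ring] at h2
    have h3 := hX x₀ (y n) (y (n + 1)) (y (n + (k + 1) + 1))
    rw [← hsplit n]
    linarith

theorem gromov_cauchy_of_linear_escape {X : Type*} [MetricSpace X] (b : ℝ) (hb : 1 < b)
    (hX : StronglyHyperbolic X b) (x₀ : X) (γ A : ℝ) (hγ : 0 < γ) (hA : 0 ≤ A)
    (y : ℕ → X)
    (hstep : ∀ n : ℕ, dist (y n) (y (n + 1)) ≤ A)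
    (hesc : ∀ n : ℕ, (n : ℝ) * γ ≤ dist (y n) x₀) :
    (∀ m n : ℕ, n < m →
        b ^ (-(gromovProd x₀ (y n) (y m)))
          ≤ (b ^ (A / 2) / (1 - b ^ (-γ))) * b ^ (-(n : ℝ) * γ))
      ∧ Tendsto (fun p : ℕ × ℕ => gromovProd x₀ (y p.1) (y p.2)) atTop atTop := by
  have hb0 : 0 < b := by linarith
  have hr : 0 < 1 - b ^ (-γ) :=
    sub_pos.2 (Real.rpow_lt_one_of_one_lt_of_neg hb (by linarith))
  have main : ∀ m n : ℕ, n < m → b ^ (-(gromovProd x₀ (y n) (y m)))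
      ≤ (b ^ (A / 2) / (1 - b ^ (-γ))) * b ^ (-(n : ℝ) * γ) := by
    intro m n hnm
    obtain ⟨k, rfl⟩ := Nat.exists_eq_add_of_lt hnm
    exact rpow_neg_gromovProd_add_le hb hX hγ hstep hesc k n
  refine ⟨main, ?_⟩
  obtain ⟨K, hK⟩ : ∃ K : ℝ, b ^ K = b ^ (A / 2) / (1 - b ^ (-γ)) :=
    ⟨_, Real.rpow_logb hb0 hb.ne' (by positivity)⟩
  -- `|K|` rather than `K`, so that the same lower bound also covers the diagonal `m = n`.
  have lower : ∀ m n : ℕ, n < m → (n : ℝ) * γ - |K| ≤ gromovProd x₀ (y n) (y m) := by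
    intro m n hnm
    have h := main m n hnm
    rw [← hK, ← Real.rpow_add hb0, Real.rpow_le_rpow_left_iff hb] at h
    linarith [le_abs_self K]
  rw [tendsto_atTop]
  intro M
  obtain ⟨N, hN⟩ := exists_nat_ge ((M + |K|) / γ)
  rw [div_le_iff₀ hγ] at hN
  filter_upwards [eventually_ge_atTop (N, N)] with p hp
  have hbound (n : ℕ) (hn : N ≤ n) : M + |K| ≤ (n : ℝ) * γ :=
    hN.trans (by gcongr)
  have h1 := hbound p.1 hp.1
  have h2 := hbound p.2 hp.2
  rcases lt_trichotomy p.1 p.2 with h | h | h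
  · linarith [lower _ _ h]
  · rw [← h, gromovProd_self]
    linarith [hesc p.1, abs_nonneg K]
  · rw [gromovProd_comm]
    linarith [lower _ _ h]
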